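/- Let ν₂(h) := (2·6^{1/3}·√π/Γ(1/3)²)·e^{-8h³/9}·U(1/6, 2/3; 8h³/9) for h ≥ 0. Then lim_{h→∞} h^{-3}·log(∫_h^∞ ν₂(χ) dχ) = -8/9. Since ν₂ is the density of the height H(1) of the true self-repelling motion at time 1, this says lim_{h→∞} h^{-3}·log P(H(1) > h) = -8/9. -/

import Mathlib

open Real MeasureTheory Set Filter Topology

noncomputable section

/-- Confluent hypergeometric function of the second kind (Tricomi function),
via its integral representation. -/
def tricomiU (a b z : ℝ) : ℝ :=
  (1 / Real.Gamma a) * ∫ s in Ioi (0:ℝ), Real.exp (-z * s) * s ^ (a - 1) * (1 + s) ^ (b - a - 1)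

/-- The density of the height `H(1)` of the TSRM at time `1`. -/
def nu2 (h : ℝ) : ℝ :=
  (2 * (6:ℝ) ^ ((1:ℝ)/3) * Real.sqrt π / (Real.Gamma (1/3)) ^ 2) *
    Real.exp (-8 * h ^ 3 / 9) * tricomiU (1/6) (2/3) (8 * h ^ 3 / 9)

def trJ (z : ℝ) : ℝ :=
  ∫ s in Ioi (0:ℝ), Real.exp (-z * s) * s ^ ((1/6 : ℝ) - 1) * (1 + s) ^ ((2/3 : ℝ) - 1/6 - 1)

lemma base_int {z : ℝ} (hz : 0 < z) :
    IntegrableOn (fun s : ℝ => Real.exp (-z * s) * s ^ ((1/6 : ℝ) - 1)) (Ioi 0) := by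
  have h := integrableOn_rpow_mul_exp_neg_mul_rpow (s := (1/6 : ℝ) - 1) (p := 1) (b := z)
    (by norm_num) (by norm_num) hz
  refine h.congr_fun (fun s _ => ?_) measurableSet_Ioi
  simp [mul_comm]

lemma J_le_pt {z s : ℝ} (hs : 0 < s) :
    Real.exp (-z * s) * s ^ ((1/6 : ℝ) - 1) * (1 + s) ^ ((2/3 : ℝ) - 1/6 - 1)
      ≤ Real.exp (-z * s) * s ^ ((1/6 : ℝ) - 1) := by
  have h1 : (1 + s) ^ ((2/3 : ℝ) - 1/6 - 1) ≤ 1 :=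
    Real.rpow_le_one_of_one_le_of_nonpos (by linarith) (by norm_num)
  exact mul_le_of_le_one_right (by positivity) h1

lemma J_int {z : ℝ} (hz : 0 < z) :
    IntegrableOn (fun s : ℝ => Real.exp (-z * s) * s ^ ((1/6 : ℝ) - 1) *
      (1 + s) ^ ((2/3 : ℝ) - 1/6 - 1)) (Ioi 0) := by
  refine Integrable.mono' (base_int hz) ?_ ?_
  · exact Measurable.aestronglyMeasurable (by fun_prop)
  · refine (ae_restrict_iff' measurableSet_Ioi).2 (Eventually.of_forall fun s hs => ?_)
    have hs : 0 < s := hs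
    rw [Real.norm_of_nonneg (by positivity)]
    exact J_le_pt hs

lemma J_upper : ∃ C : ℝ, 0 < C ∧ ∀ z : ℝ, 1/2 ≤ z → trJ z ≤ C := by
  refine ⟨|∫ s in Ioi (0:ℝ), Real.exp (-(1/2 : ℝ) * s) * s ^ ((1/6 : ℝ) - 1)| + 1,
    by positivity, fun z hz => ?_⟩
  refine le_trans ?_ (le_trans (le_abs_self _) (le_add_of_nonneg_right zero_le_one))
  refine setIntegral_mono_on (J_int (by linarith)) (base_int (by norm_num)) measurableSet_Ioi ?_
  intro s hs
  have hs : 0 < s := hs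
  refine (J_le_pt hs).trans ?_
  have : Real.exp (-z * s) ≤ Real.exp (-(1/2 : ℝ) * s) := Real.exp_le_exp.2 (by nlinarith)
  gcongr

lemma J_lower : ∃ c : ℝ, 0 < c ∧ ∀ z : ℝ, 1 ≤ z → c / z ≤ trJ z := by
  refine ⟨Real.exp (-1) * 2 ^ ((2/3 : ℝ) - 1/6 - 1), by positivity, fun z hz => ?_⟩
  have hz0 : 0 < z := by linarith
  have hsub : Ioc (0:ℝ) (1/z) ⊆ Ioi 0 := fun s hs => hs.1
  have h1 : ∫ s in Ioc (0:ℝ) (1/z), Real.exp (-z * s) * s ^ ((1/6 : ℝ) - 1) *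
      (1 + s) ^ ((2/3 : ℝ) - 1/6 - 1) ≤ trJ z := by
    refine setIntegral_mono_set (J_int hz0) ?_ hsub.eventuallyLE
    refine (ae_restrict_iff' measurableSet_Ioi).2 (Eventually.of_forall fun s hs => ?_)
    have hs : 0 < s := hs
    simp only [Pi.zero_apply]
    positivity
  refine le_trans ?_ h1
  have h2 : ∫ s in Ioc (0:ℝ) (1/z), Real.exp (-1) * (2:ℝ) ^ ((2/3 : ℝ) - 1/6 - 1) =
      Real.exp (-1) * 2 ^ ((2/3 : ℝ) - 1/6 - 1) / z := by
    rw [setIntegral_const, Real.volume_real_Ioc_of_le (by positivity), smul_eq_mul]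
    ring
  rw [← h2]
  refine setIntegral_mono_on (integrableOn_const (by simp)) ((J_int hz0).mono_set hsub)
    measurableSet_Ioc ?_
  intro s hs
  have hs0 : 0 < s := hs.1
  have hzs : s * z ≤ 1 := (le_div_iff₀ hz0).1 hs.2
  have hs1 : s ≤ 1 := by nlinarith
  have e1 : Real.exp (-1) ≤ Real.exp (-z * s) := Real.exp_le_exp.2 (by nlinarith)
  have e2 : 1 ≤ s ^ ((1/6 : ℝ) - 1) :=
    Real.one_le_rpow_of_pos_of_le_one_of_nonpos hs0 hs1 (by norm_num)
  have e3 : (2:ℝ) ^ ((2/3 : ℝ) - 1/6 - 1) ≤ (1 + s) ^ ((2/3 : ℝ) - 1/6 - 1) :=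
    Real.rpow_le_rpow_of_nonpos (by linarith) (by linarith) (by norm_num)
  calc Real.exp (-1) * (2:ℝ) ^ ((2/3 : ℝ) - 1/6 - 1)
      = Real.exp (-1) * 1 * (2:ℝ) ^ ((2/3 : ℝ) - 1/6 - 1) := by ring
    _ ≤ _ := by gcongr

lemma J_meas : Measurable trJ := by
  have : StronglyMeasurable (fun p : ℝ × ℝ => Real.exp (-p.1 * p.2) * p.2 ^ ((1/6 : ℝ) - 1) *
      (1 + p.2) ^ ((2/3 : ℝ) - 1/6 - 1)) := Measurable.stronglyMeasurable (by fun_prop)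
  exact (this.integral_prod_right (ν := volume.restrict (Ioi (0:ℝ)))).measurable

lemma nu2_eq : ∃ B : ℝ, 0 < B ∧ ∀ h, nu2 h = B * Real.exp (-8 * h ^ 3 / 9) * trJ (8 * h ^ 3 / 9) := by
  have g1 : 0 < Real.Gamma (1/3) := Real.Gamma_pos_of_pos (by norm_num)
  have g2 : 0 < Real.Gamma (1/6) := Real.Gamma_pos_of_pos (by norm_num)
  refine ⟨(2 * (6:ℝ) ^ ((1:ℝ)/3) * Real.sqrt π / (Real.Gamma (1/3)) ^ 2) * (1 / Real.Gamma (1/6)),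
    by positivity, fun h => ?_⟩
  unfold nu2 tricomiU trJ
  ring

lemma nu2_bounds : ∃ K k : ℝ, 0 < K ∧ 0 < k ∧ ∀ h : ℝ, 2 ≤ h →
    nu2 h ≤ K * Real.exp (-8 * h ^ 3 / 9) ∧ k / h ^ 3 * Real.exp (-8 * h ^ 3 / 9) ≤ nu2 h := by
  obtain ⟨B, hB, hnu⟩ := nu2_eq
  obtain ⟨C, hC, hJ⟩ := J_upper
  obtain ⟨c, hc, hJ'⟩ := J_lower
  refine ⟨B * C, B * c * (9/8), by positivity, by positivity, fun h hh => ?_⟩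
  have h3 : (2:ℝ)^3 ≤ h ^ 3 := by gcongr
  have h1 := hJ (8 * h ^ 3 / 9) (by linarith)
  have h2 := hJ' (8 * h ^ 3 / 9) (by linarith)
  rw [hnu]
  have hE := Real.exp_pos (-8 * h ^ 3 / 9)
  have h0 : 0 < h := by linarith
  constructor
  · calc _ ≤ B * Real.exp (-8 * h ^ 3 / 9) * C := by gcongr
      _ = _ := by ring
  · calc _ = B * Real.exp (-8 * h ^ 3 / 9) * (c / (8 * h ^ 3 / 9)) := by field_simp
      _ ≤ _ := by gcongr

lemma nu2_meas : Measurable nu2 := by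
  obtain ⟨B, hB, hnu⟩ := nu2_eq
  rw [funext hnu]
  have := J_meas
  fun_prop

lemma exp_int (h : ℝ) :
    IntegrableOn (fun x : ℝ => Real.exp (-8 * h ^ 3 / 9 + h) * Real.exp (-x)) (Ioi h) :=
  (integrableOn_exp_neg_Ioi h).const_mul _

lemma tail_bounds : ∃ K k : ℝ, 0 < K ∧ 0 < k ∧ ∀ h : ℝ, 2 ≤ h →
    (∫ x in Ioi h, nu2 x) ≤ K * Real.exp (-8 * h ^ 3 / 9) ∧
    k / (h + 1) ^ 3 * Real.exp (-8 * (h + 1) ^ 3 / 9) ≤ ∫ x in Ioi h, nu2 x := by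
  obtain ⟨K, k, hK, hk, hb⟩ := nu2_bounds
  refine ⟨K, k, hK, hk, fun h hh => ?_⟩
  have hpos : ∀ x, 2 ≤ x → 0 ≤ nu2 x := fun x hx =>
    le_trans (by have : 0 < x := by linarith
                 positivity) (hb x hx).2
  have hup : ∀ x ∈ Ioi h, nu2 x ≤ K * (Real.exp (-8 * h ^ 3 / 9 + h) * Real.exp (-x)) := by
    intro x hx
    have hx : h < x := hx
    refine (hb x (by linarith)).1.trans ?_
    rw [← Real.exp_add]
    have : -8 * x ^ 3 / 9 ≤ -8 * h ^ 3 / 9 + h + -x := by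
      have : 0 ≤ (x - h) * (8 * (x^2 + x*h + h^2) - 9) := by
        apply mul_nonneg <;> nlinarith
      nlinarith
    gcongr
  have hint2 := (exp_int h).const_mul K
  have hint : IntegrableOn nu2 (Ioi h) := by
    refine Integrable.mono' hint2 nu2_meas.aestronglyMeasurable ?_
    refine (ae_restrict_iff' measurableSet_Ioi).2 (Eventually.of_forall fun x hx => ?_)
    rw [Real.norm_of_nonneg (hpos x (hh.trans (le_of_lt hx)))]
    exact hup x hx
  constructor
  · refine (setIntegral_mono_on hint hint2 measurableSet_Ioi hup).trans ?_
    rw [integral_const_mul, integral_const_mul, integral_exp_neg_Ioi, ← Real.exp_add]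
    simp
  · have hsub : Ioc h (h+1) ⊆ Ioi h := fun s hs => hs.1
    have h1 : ∫ x in Ioc h (h+1), nu2 x ≤ ∫ x in Ioi h, nu2 x := by
      refine setIntegral_mono_set hint ?_ hsub.eventuallyLE
      exact (ae_restrict_iff' measurableSet_Ioi).2 (Eventually.of_forall fun x hx =>
        hpos x (hh.trans (le_of_lt hx)))
    refine le_trans ?_ h1
    have h2 : ∫ x in Ioc h (h+1), k / (h + 1) ^ 3 * Real.exp (-8 * (h + 1) ^ 3 / 9) =
        k / (h + 1) ^ 3 * Real.exp (-8 * (h + 1) ^ 3 / 9) := by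
      rw [setIntegral_const, Real.volume_real_Ioc_of_le (by linarith), smul_eq_mul]
      ring
    rw [← h2]
    refine setIntegral_mono_on (integrableOn_const (by simp)) (hint.mono_set hsub)
      measurableSet_Ioc ?_
    intro x hx
    have hx1 : h < x := hx.1
    have hx0 : 0 < x := by linarith
    have hx2 : x ≤ h + 1 := hx.2
    refine le_trans ?_ (hb x (by linarith)).2
    have h3 : x ^ 3 ≤ (h+1)^3 := by gcongr
    have h4 : -8 * (h + 1) ^ 3 / 9 ≤ -8 * x ^ 3 / 9 := by linarith
    gcongr

/-- tail asymptotics of the height of the TSRM: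
`lim_{h→∞} h⁻³·log P(H(1) > h) = -8/9`, where `P(H(1) > h) = ∫_h^∞ ν₂`. -/
theorem stmt18 :
    Tendsto (fun h : ℝ => (h ^ 3)⁻¹ * Real.log (∫ χ in Ioi h, nu2 χ))
      atTop (𝓝 (-8/9)) := by
  obtain ⟨K, k, hK, hk, hb⟩ := tail_bounds
  have hinv : Tendsto (fun h : ℝ => h⁻¹) atTop (𝓝 0) := tendsto_inv_atTop_zero
  have hlow : Tendsto (fun h : ℝ => Real.log k * h⁻¹ ^ 3 - 3 * h⁻¹ ^ 2 - 8/9 * (1 + h⁻¹) ^ 3)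
      atTop (𝓝 (-8/9)) := by
    have hc : Continuous (fun x : ℝ => Real.log k * x ^ 3 - 3 * x ^ 2 - 8/9 * (1 + x) ^ 3) := by
      fun_prop
    have := (hc.tendsto 0).comp hinv
    convert this using 2 <;> norm_num
  have hupp : Tendsto (fun h : ℝ => Real.log K * h⁻¹ ^ 3 - 8/9) atTop (𝓝 (-8/9)) := by
    have hc : Continuous (fun x : ℝ => Real.log K * x ^ 3 - 8/9) := by
      fun_prop
    have := (hc.tendsto 0).comp hinv
    convert this using 2 <;> norm_num
  refine tendsto_of_tendsto_of_tendsto_of_le_of_le' hlow hupp ?_ ?_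
  · filter_upwards [eventually_ge_atTop 2] with h hh
    have h0 : 0 < h := by linarith
    have hl := Real.log_le_log (by positivity) (hb h hh).2
    rw [Real.log_mul (by positivity) (by positivity), Real.log_div (by positivity) (by positivity),
      Real.log_exp, Real.log_pow] at hl
    have hlog : Real.log (h + 1) ≤ h := by
      have := Real.log_le_sub_one_of_pos (x := h + 1) (by linarith)
      linarith
    push_cast at hl
    have hl2 : Real.log k - 3 * h - 8/9 * (h+1)^3 ≤ Real.log (∫ x in Ioi h, nu2 x) := by linarith
    calc _ = (h^3)⁻¹ * (Real.log k - 3 * h - 8/9 * (h+1)^3) := by field_simp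
      _ ≤ _ := by gcongr
  · filter_upwards [eventually_ge_atTop 2] with h hh
    have h0 : 0 < h := by linarith
    have hpos : 0 < ∫ x in Ioi h, nu2 x := lt_of_lt_of_le (by positivity) (hb h hh).2
    have hl := Real.log_le_log hpos (hb h hh).1
    rw [Real.log_mul (by positivity) (by positivity), Real.log_exp] at hl
    calc _ ≤ (h^3)⁻¹ * (Real.log K + -8 * h ^ 3 / 9) := by gcongr
      _ = _ := by field_simp; ring
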